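/- arXiv:1101.2918 — 2 statements merged into one kernel-verified Lean document; each statement's English description precedes it below -/
import Mathlib

section
/- A symmetric monoidal functor f : 𝔸 → 𝔹 between abelian 2-groups is an equivalence of categories if and only if the induced homomorphisms π^0(𝔸) → π^0(𝔹) and π^{-1}(𝔸) → π^{-1}(𝔹) are both isomorphisms of abelian groups. -/
open CategoryTheory MonoidalCategory

universe v u

/-- An abelian 2-group (Picard groupoid): a groupoid equipped with a symmetric monoidal
structure `+` such that for every object `x` the functor `x + (−)` is an equivalence of
categories. -/
class Abelian2Group (C : Type u) [Groupoid.{v} C] [MonoidalCategory C]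
    [SymmetricCategory C] : Prop where
  isEquivalence_tensorLeft : ∀ x : C, (tensorLeft x).IsEquivalence

/-- The setoid on objects of a category identifying isomorphic objects. -/
def isoSetoid (C : Type u) [Category.{v} C] : Setoid C where
  r x y := Nonempty (x ≅ y)
  iseqv := ⟨fun x => ⟨Iso.refl x⟩, fun ⟨e⟩ => ⟨e.symm⟩, fun ⟨e⟩ ⟨f⟩ => ⟨e ≪≫ f⟩⟩

/-- `π^0(C)`: the isomorphism classes of objects of `C`. -/
def pi0 (C : Type u) [Category.{v} C] : Type u := Quotient (isoSetoid C)

/-- The map `π^0(C) → π^0(D)` induced by a functor. -/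
def pi0Map {C : Type u} {D : Type u} [Category.{v} C] [Category.{v} D] (F : C ⥤ D) :
    pi0 C → pi0 D :=
  Quotient.map F.obj (fun _ _ e => e.elim fun i => Nonempty.intro (F.mapIso i))

/-- The map `π^{-1}(C) = Aut(0) → π^{-1}(D) = Aut(0)` induced by a (strong) monoidal
functor, via conjugation with the unit constraint. -/
def pi1Map {C D : Type u} [Category.{v} C] [Category.{v} D] [MonoidalCategory C]
    [MonoidalCategory D] (F : C ⥤ D) [F.Monoidal] : Aut (𝟙_ C) → Aut (𝟙_ D) :=
  fun a => (Functor.Monoidal.εIso F) ≪≫ F.mapIso a ≪≫ (Functor.Monoidal.εIso F).symm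

/-- `π^{-1}`-bijectivity says that `f` is bijective on endomorphisms of the unit. -/
lemma bijective_map_unit {A B : Type u} [Groupoid.{v} A] [Groupoid.{v} B]
    [MonoidalCategory A] [MonoidalCategory B] (f : A ⥤ B) [f.Monoidal] :
    Function.Bijective (pi1Map f) ↔
      Function.Bijective (fun a : 𝟙_ A ⟶ 𝟙_ A => f.map a) := by
  have key : ∀ a, (pi1Map f a).hom = (Functor.Monoidal.εIso f).hom ≫ f.map a.hom ≫
      (Functor.Monoidal.εIso f).inv := fun a => rfl
  constructor
  · rintro ⟨hi, hs⟩
    constructor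
    · intro a b hab
      have : (asIso a : Aut (𝟙_ A)) = asIso b := by
        apply hi
        apply Iso.ext
        change (Functor.Monoidal.εIso f).hom ≫ f.map a ≫ (Functor.Monoidal.εIso f).inv =
          (Functor.Monoidal.εIso f).hom ≫ f.map b ≫ (Functor.Monoidal.εIso f).inv
        dsimp only at hab
        rw [hab]
      exact congrArg Iso.hom this
    · intro k
      obtain ⟨a, ha⟩ := hs ((Functor.Monoidal.εIso f) ≪≫ asIso k ≪≫
        (Functor.Monoidal.εIso f).symm)
      refine ⟨a.hom, ?_⟩
      have h := congrArg Iso.hom ha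
      rw [key] at h
      simp only [Iso.trans_hom, Iso.symm_hom, asIso_hom] at h
      exact (cancel_mono _).1 ((cancel_epi _).1 h)
  · rintro ⟨hi, hs⟩
    constructor
    · intro a b hab
      have h := congrArg Iso.hom hab
      rw [key, key] at h
      exact Iso.ext (hi ((cancel_mono _).1 ((cancel_epi _).1 h)))
    · intro k
      obtain ⟨a, ha⟩ := hs ((Functor.Monoidal.εIso f).inv ≫ k.hom ≫
        (Functor.Monoidal.εIso f).hom)
      refine ⟨asIso a, ?_⟩
      apply Iso.ext
      change (Functor.Monoidal.εIso f).hom ≫ f.map a ≫ (Functor.Monoidal.εIso f).inv = _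
      dsimp only at ha
      rw [ha]
      simp

lemma bijective_map_end {A B : Type u} [Groupoid.{v} A] [Groupoid.{v} B]
    [MonoidalCategory A] [SymmetricCategory A] [MonoidalCategory B] [SymmetricCategory B]
    [Abelian2Group A] [Abelian2Group B] (f : A ⥤ B) [f.Monoidal]
    (h : Function.Bijective (fun a : 𝟙_ A ⟶ 𝟙_ A => f.map a)) (x : A) :
    Function.Bijective (fun a : x ⟶ x => f.map a) := by
  have := Abelian2Group.isEquivalence_tensorLeft x
  have := Abelian2Group.isEquivalence_tensorLeft (f.obj x)
  have rep : ∀ g : x ⟶ x, ∃ a : 𝟙_ A ⟶ 𝟙_ A, g = (ρ_ x).inv ≫ x ◁ a ≫ (ρ_ x).hom := by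
    intro g
    obtain ⟨a, ha⟩ := (tensorLeft x).map_surjective ((ρ_ x).hom ≫ g ≫ (ρ_ x).inv)
    refine ⟨a, ?_⟩
    have ha' : x ◁ a = (ρ_ x).hom ≫ g ≫ (ρ_ x).inv := ha
    rw [ha']
    simp
  have fm : ∀ a : 𝟙_ A ⟶ 𝟙_ A, f.map ((ρ_ x).inv ≫ x ◁ a ≫ (ρ_ x).hom) =
      f.map (ρ_ x).inv ≫ (Functor.OplaxMonoidal.δ f x (𝟙_ A) ≫ f.obj x ◁ f.map a ≫
        Functor.LaxMonoidal.μ f x (𝟙_ A)) ≫ f.map (ρ_ x).hom := by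
    intro a
    rw [f.map_comp, f.map_comp, Functor.Monoidal.map_whiskerLeft]
  constructor
  · intro g k hgk
    obtain ⟨a, rfl⟩ := rep g
    obtain ⟨b, rfl⟩ := rep k
    dsimp only at hgk
    rw [fm, fm] at hgk
    have h1 := (cancel_mono _).1 ((cancel_epi _).1 hgk)
    have h2 := (cancel_mono _).1 ((cancel_epi _).1 h1)
    have h3 := h.1 ((tensorLeft (f.obj x)).map_injective h2)
    rw [h3]
  · intro k
    obtain ⟨c, hc⟩ := (tensorLeft (f.obj x)).map_surjective
      (Functor.LaxMonoidal.μ f x (𝟙_ A) ≫ f.map (ρ_ x).hom ≫ k ≫ f.map (ρ_ x).inv ≫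
        Functor.OplaxMonoidal.δ f x (𝟙_ A))
    obtain ⟨a, rfl⟩ := h.2 c
    refine ⟨(ρ_ x).inv ≫ x ◁ a ≫ (ρ_ x).hom, ?_⟩
    have hc' : f.obj x ◁ f.map a = _ := hc
    dsimp only
    rw [fm, hc']
    simp [← Functor.map_comp, ← Functor.map_comp_assoc]

/-- **Statement 13.** A symmetric monoidal functor `f : 𝔸 ⥤ 𝔹` between abelian 2-groups is an
equivalence of categories if and only if the induced maps `π^0(𝔸) → π^0(𝔹)` and
`π^{-1}(𝔸) → π^{-1}(𝔹)` are both bijective (i.e. isomorphisms of abelian groups). -/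
theorem abelian2Group_equivalence_iff_pi_iso {A B : Type u} [Groupoid.{v} A] [Groupoid.{v} B]
    [MonoidalCategory A] [SymmetricCategory A] [MonoidalCategory B] [SymmetricCategory B]
    [Abelian2Group A] [Abelian2Group B] (f : A ⥤ B) [f.Braided] :
    f.IsEquivalence ↔ Function.Bijective (pi0Map f) ∧ Function.Bijective (pi1Map f) := by
  rw [bijective_map_unit]
  constructor
  · intro hf
    refine ⟨⟨?_, ?_⟩, ⟨f.map_injective, f.map_surjective⟩⟩
    · intro p q
      refine Quotient.inductionOn₂ p q ?_
      intro x y hxy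
      obtain ⟨e⟩ : Nonempty (f.obj x ≅ f.obj y) := Quotient.exact hxy
      exact Quotient.sound ⟨f.preimageIso e⟩
    · intro q
      refine Quotient.inductionOn q ?_
      intro y
      exact ⟨Quotient.mk _ (f.objPreimage y), Quotient.sound ⟨f.objObjPreimageIso y⟩⟩
  · rintro ⟨⟨hi, hs⟩, h1⟩
    have hE := bijective_map_end f h1
    have hfaith : f.Faithful := ⟨by
      intro x y g k hgk
      have : g ≫ inv k = 𝟙 x := by
        apply (hE x).1
        simp [hgk]
      simpa using congrArg (· ≫ k) this⟩
    have hfull : f.Full := ⟨by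
      intro x y k
      obtain ⟨e⟩ : Nonempty (x ≅ y) := by
        apply Quotient.exact (s := isoSetoid A)
        apply hi
        exact Quotient.sound ⟨asIso k⟩
      obtain ⟨g, hg⟩ := (hE x).2 (k ≫ f.map e.inv)
      refine ⟨g ≫ e.hom, ?_⟩
      dsimp only at hg
      rw [f.map_comp, hg, Category.assoc, ← f.map_comp]
      simp⟩
    have hess : f.EssSurj := ⟨by
      intro y
      obtain ⟨p, hp⟩ := hs (Quotient.mk _ y)
      induction p using Quotient.inductionOn with
      | h x => exact ⟨x, Quotient.exact (s := isoSetoid B) hp⟩⟩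
    exact { }
end

section
/- Let 𝔸 be an abelian 2-group with symmetry constraints c_{x,y} : x + y → y + x. For each object a, let q(a) ∈ π^{-1}(𝔸) = Aut(0) be the automorphism corresponding to c_{a,a} ∈ Aut(a + a) under the canonical isomorphism Aut(0) → Aut(a + a) induced by the equivalence (a + a) + (−). Then q(a) depends only on the isomorphism class of a, the resulting map π^0(𝔸) → π^{-1}(𝔸) is a group homomorphism, and it vanishes on 2π^0(𝔸), hence induces a group homomorphism π^0(𝔸)/2π^0(𝔸) → π^{-1}(𝔸). -/
open CategoryTheory MonoidalCategory

universe v u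

variable (C : Type u) [Groupoid.{v} C] [MonoidalCategory C] [SymmetricCategory C]
  [Abelian2Group C]

/-- For an object `a` of an abelian 2-group, the element of `π^{-1} = Aut(0) = End(0)`
corresponding to the symmetry `c_{a,a} ∈ Aut(a + a)` under the canonical isomorphism
`Aut(0) ≅ Aut(a + a)` induced by the equivalence `(a + a) + (−)`. -/
noncomputable def symmetryClass (a : C) : 𝟙_ C ⟶ 𝟙_ C :=
  haveI := Abelian2Group.isEquivalence_tensorLeft (C := C) (a ⊗ a)
  (tensorLeft (a ⊗ a)).preimage ((ρ_ (a ⊗ a)).hom ≫ (β_ a a).hom ≫ (ρ_ (a ⊗ a)).inv)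

section Helpers

variable {D : Type u} [Category.{v} D] [MonoidalCategory D]

/-- The action of an endomorphism of the unit on an object. -/
def unitAct (X : D) (f : 𝟙_ D ⟶ 𝟙_ D) : X ⟶ X := (ρ_ X).inv ≫ X ◁ f ≫ (ρ_ X).hom

theorem unitAct_nat {X Y : D} (g : X ⟶ Y) (f : 𝟙_ D ⟶ 𝟙_ D) :
    unitAct X f ≫ g = g ≫ unitAct Y f := by
  unfold unitAct
  rw [Category.assoc, Category.assoc, ← rightUnitor_naturality, whisker_exchange_assoc,
    rightUnitor_inv_naturality_assoc]

theorem unitAct_comp (X : D) (f g : 𝟙_ D ⟶ 𝟙_ D) :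
    unitAct X (f ≫ g) = unitAct X f ≫ unitAct X g := by
  simp [unitAct]

theorem unitAct_id (X : D) : unitAct X (𝟙 _) = 𝟙 X := by
  simp [unitAct]

theorem unitAct_left (X Y : D) (f : 𝟙_ D ⟶ 𝟙_ D) :
    X ◁ unitAct Y f = unitAct (X ⊗ Y) f := by
  simp [unitAct]

theorem unitAct_right [BraidedCategory D] (X Y : D) (f : 𝟙_ D ⟶ 𝟙_ D) :
    unitAct X f ▷ Y = unitAct (X ⊗ Y) f := by
  rw [← cancel_mono (β_ X Y).hom, BraidedCategory.braiding_naturality_left, unitAct_left,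
    unitAct_nat]

end Helpers

theorem unitAct_inj (X : C) {f g : 𝟙_ C ⟶ 𝟙_ C} (h : unitAct X f = unitAct X g) : f = g := by
  have := Abelian2Group.isEquivalence_tensorLeft (C := C) X
  apply (tensorLeft X).map_injective
  simpa [unitAct] using h

theorem unitAct_symmetryClass (a : C) :
    unitAct (a ⊗ a) (symmetryClass C a) = (β_ a a).hom := by
  have := Abelian2Group.isEquivalence_tensorLeft (C := C) (a ⊗ a)
  have h : (a ⊗ a) ◁ symmetryClass C a =
      (ρ_ (a ⊗ a)).hom ≫ (β_ a a).hom ≫ (ρ_ (a ⊗ a)).inv :=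
    (tensorLeft (a ⊗ a)).map_preimage _
  rw [unitAct, h]
  simp

theorem symmetryClass_iso {a b : C} (e : a ≅ b) : symmetryClass C a = symmetryClass C b := by
  apply unitAct_inj C (b ⊗ b)
  rw [unitAct_symmetryClass, ← cancel_epi (e.hom ⊗ₘ e.hom), ← unitAct_nat,
    unitAct_symmetryClass, BraidedCategory.braiding_naturality]

theorem symmetryClass_tensor (a b : C) :
    symmetryClass C (a ⊗ b) = symmetryClass C a ≫ symmetryClass C b := by
  apply unitAct_inj C ((a ⊗ b) ⊗ (a ⊗ b))
  have hs := SymmetricCategory.tensorμ_braid_swap a b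
  rw [unitAct_symmetryClass, ← cancel_epi (tensorμ a a b b), hs, ← unitAct_nat, unitAct_comp,
    MonoidalCategory.tensorHom_def, ← unitAct_symmetryClass, 
    ← unitAct_symmetryClass, unitAct_left, unitAct_right]

theorem symmetryClass_sq (a : C) : symmetryClass C (a ⊗ a) = 𝟙 (𝟙_ C) := by
  rw [symmetryClass_tensor]
  apply unitAct_inj C (a ⊗ a)
  rw [unitAct_comp, unitAct_symmetryClass, unitAct_id, SymmetricCategory.symmetry]

/-- **Statement 16.** For an abelian 2-group `𝔸`, the assignment
`a ↦ q(a) ∈ π^{-1}(𝔸) = Aut(0)` determined by the symmetry `c_{a,a} ∈ Aut(a+a)` depends only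
on the isomorphism class of `a`, defines a group homomorphism `π^0(𝔸) → π^{-1}(𝔸)`, and
vanishes on `2π^0(𝔸)`, hence descends to a group homomorphism
`π^0(𝔸)/2π^0(𝔸) → π^{-1}(𝔸)`. -/
theorem symmetryClass_descends :
    (∀ a b : C, Nonempty (a ≅ b) → symmetryClass C a = symmetryClass C b) ∧
    (∀ a b : C, symmetryClass C (a ⊗ b) = symmetryClass C a ≫ symmetryClass C b) ∧
    (∀ a : C, symmetryClass C (a ⊗ a) = 𝟙 (𝟙_ C)) ∧
    (∃ φ : pi0 C → (𝟙_ C ⟶ 𝟙_ C),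
      (∀ a : C, φ (Quotient.mk (isoSetoid C) a) = symmetryClass C a) ∧
      (∀ a b : C, φ (Quotient.mk (isoSetoid C) (a ⊗ (b ⊗ b))) =
        φ (Quotient.mk (isoSetoid C) a))) := by
  refine ⟨fun a b ⟨e⟩ => symmetryClass_iso C e, symmetryClass_tensor C, symmetryClass_sq C,
    Quotient.lift (symmetryClass C) (fun a b ⟨e⟩ => symmetryClass_iso C e), fun a => rfl,
    fun a b => ?_⟩
  change symmetryClass C (a ⊗ (b ⊗ b)) = symmetryClass C a
  rw [symmetryClass_tensor, symmetryClass_sq, Category.comp_id]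
end
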